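/- The mean of a Gaussian random variable with mean θ and variance v, truncated to the region [0, ∞), is monotonically increasing as a function of θ. -/

import Mathlib

open MeasureTheory ProbabilityTheory Real
open scoped NNReal

lemma tg_integrable (θ : ℝ) (v : ℝ≥0) (hv : v ≠ 0) :
    Integrable (fun x => gaussianPDFReal θ v x * x) := by
  have h : Integrable (fun x : ℝ => x) (gaussianReal θ v) :=
    (memLp_id_gaussianReal (μ := θ) (v := v) 1).integrable (by simp)
  rw [gaussianReal_of_var_ne_zero _ hv,
    integrable_withDensity_iff_integrable_smul' (measurable_gaussianPDF θ v)
      (Filter.Eventually.of_forall fun _ => gaussianPDF_lt_top)] at h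
  simpa [toReal_gaussianPDF] using h

lemma tg_num (θ : ℝ) (v : ℝ≥0) (hv : v ≠ 0) :
    ∫ x in Set.Ici (0 : ℝ), x ∂(gaussianReal θ v)
      = ∫ x in Set.Ici (0 : ℝ), gaussianPDFReal θ v x * x := by
  rw [← integral_indicator measurableSet_Ici, integral_gaussianReal_eq_integral_smul hv,
    ← integral_indicator measurableSet_Ici]
  congr 1
  ext x
  by_cases hx : x ∈ Set.Ici (0 : ℝ) <;> simp [Set.indicator, hx]

lemma tg_den (θ : ℝ) (v : ℝ≥0) (hv : v ≠ 0) :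
    ((gaussianReal θ v) (Set.Ici (0 : ℝ))).toReal
      = ∫ x in Set.Ici (0 : ℝ), gaussianPDFReal θ v x := by
  rw [gaussianReal_apply_eq_integral _ hv, ENNReal.toReal_ofReal]
  exact integral_nonneg fun x => gaussianPDFReal_nonneg _ _ _

lemma tg_den_pos (θ : ℝ) (v : ℝ≥0) (hv : v ≠ 0) :
    0 < ((gaussianReal θ v) (Set.Ici (0 : ℝ))).toReal := by
  refine ENNReal.toReal_pos (fun h => ?_) (measure_ne_top _ _)
  have := gaussianReal_absolutelyContinuous' θ hv h
  simp at this

lemma tg_mlr (a b : ℝ) (hab : a ≤ b) (v : ℝ≥0) {x y : ℝ} (h : x ≤ y) :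
    gaussianPDFReal b v x * gaussianPDFReal a v y
      ≤ gaussianPDFReal b v y * gaussianPDFReal a v x := by
  simp only [gaussianPDFReal]
  have : rexp (-(x - b) ^ 2 / (2 * v)) * rexp (-(y - a) ^ 2 / (2 * v))
      ≤ rexp (-(y - b) ^ 2 / (2 * v)) * rexp (-(x - a) ^ 2 / (2 * v)) := by
    rw [← Real.exp_add, ← Real.exp_add, Real.exp_le_exp, ← add_div, ← add_div]
    gcongr ?_ / _
    nlinarith [mul_nonneg (sub_nonneg.2 hab) (sub_nonneg.2 h)]
  calc _ = ((√(2 * π * v))⁻¹ * (√(2 * π * v))⁻¹) *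
        (rexp (-(x - b) ^ 2 / (2 * v)) * rexp (-(y - a) ^ 2 / (2 * v))) := by ring
    _ ≤ ((√(2 * π * v))⁻¹ * (√(2 * π * v))⁻¹) *
        (rexp (-(y - b) ^ 2 / (2 * v)) * rexp (-(x - a) ^ 2 / (2 * v))) := by gcongr
    _ = _ := by ring

/-- The mean of a Gaussian `N(θ, v)` truncated to `[0, ∞)` is monotonically
increasing as a function of `θ`. -/
theorem truncated_gaussian_mean_monotone (v : ℝ≥0) (hv : 0 < v) :
    Monotone (fun θ : ℝ =>
      (∫ x in Set.Ici (0 : ℝ), x ∂(gaussianReal θ v)) /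
        ((gaussianReal θ v) (Set.Ici (0 : ℝ))).toReal) := by
  intro a b hab
  have hv := hv.ne'
  have hDa := tg_den_pos a v hv
  have hDb := tg_den_pos b v hv
  simp only
  rw [le_div_iff₀ hDb]
  obtain ⟨m, hm⟩ : ∃ m, m = (∫ x in Set.Ici (0 : ℝ), x ∂(gaussianReal a v)) /
        ((gaussianReal a v) (Set.Ici (0 : ℝ))).toReal := ⟨_, rfl⟩
  rw [← hm]
  rw [eq_div_iff hDa.ne'] at hm
  rw [tg_num _ _ hv, tg_den _ _ hv] at hm ⊢
  have key (θ c : ℝ) : ∫ x in Set.Ici (0 : ℝ),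
      c * (gaussianPDFReal θ v x * x - m * gaussianPDFReal θ v x)
      = c * ((∫ x in Set.Ici (0 : ℝ), gaussianPDFReal θ v x * x)
        - m * ∫ x in Set.Ici (0 : ℝ), gaussianPDFReal θ v x) := by
    rw [integral_const_mul, integral_sub, integral_const_mul]
    · exact (tg_integrable θ v hv).integrableOn
    · exact ((integrable_gaussianPDFReal θ v).const_mul m).integrableOn
  have hint (θ c : ℝ) : Integrable (fun x =>
      c * (gaussianPDFReal θ v x * x - m * gaussianPDFReal θ v x)) :=
    ((tg_integrable θ v hv).sub ((integrable_gaussianPDFReal θ v).const_mul m)).const_mul c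
  have hle : ∫ x in Set.Ici (0 : ℝ),
      gaussianPDFReal b v m * (gaussianPDFReal a v x * x - m * gaussianPDFReal a v x)
      ≤ ∫ x in Set.Ici (0 : ℝ),
      gaussianPDFReal a v m * (gaussianPDFReal b v x * x - m * gaussianPDFReal b v x) := by
    refine integral_mono (hint a _).integrableOn (hint b _).integrableOn fun x => ?_
    simp only
    rcases le_total m x with h | h
    · nlinarith [mul_le_mul_of_nonneg_left (tg_mlr a b hab v h) (sub_nonneg.2 h)]
    · nlinarith [mul_le_mul_of_nonneg_left (tg_mlr a b hab v h) (sub_nonneg.2 h)]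
  rw [key, key, ← hm, sub_self, mul_zero] at hle
  have := nonneg_of_mul_nonneg_right hle (gaussianPDFReal_pos a v m hv)
  linarith
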